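/- Let d ≥ 1 and let φ : ℕ → (0,∞) be a positive increasing function with ∑_{n=1}^∞ 1/φ(n) < ∞. Then for Lebesgue-almost every α = (α₁,…,α_d) ∈ ℝ^d there is a constant C(α,φ) such that for all N ≥ 3, Δ(α;N) ≤ C(α,φ)·(log N)^d · φ(log log N)^{max{3,d}}. -/

import Mathlib

open MeasureTheory Finset

noncomputable section

/-- Ergodic discrepancy of the d-linear form sequence
`D(α,x;N) = ∑_{1≤k₁,…,k_d≤N} χ_{[0,x)}({k₁α₁+⋯+k_dα_d}) − N^d·x`. -/
def DiscLF (d N : ℕ) (α : Fin d → ℝ) (x : ℝ) : ℝ :=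
  (∑ k ∈ (Fintype.piFinset fun _ : Fin d => Finset.Icc 1 N),
      if Int.fract (∑ i : Fin d, (k i : ℝ) * α i) < x then (1 : ℝ) else 0)
    - (N : ℝ) ^ d * x

/-- The periodic second Bernoulli function. -/
def periodicBernoulliTwo (y : ℝ) : ℝ := Int.fract y ^ 2 - Int.fract y + 1 / 6

theorem fract_sub_eq {x : ℝ} (h0 : 0 ≤ x) (h1 : x ≤ 1) (y : ℝ) :
    Int.fract (y - x) = Int.fract y - x + if Int.fract y < x then 1 else 0 := by
  have hu := Int.fract_nonneg y
  have hu1 := Int.fract_lt_one y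
  rw [Int.fract_eq_iff]
  refine ⟨?_, ?_, ?_⟩
  · split_ifs <;> linarith
  · split_ifs <;> linarith
  · refine ⟨⌊y⌋ - if Int.fract y < x then 1 else 0, ?_⟩
    have := Int.floor_add_fract y
    push_cast
    split_ifs <;> linarith

theorem fract_sub_half_le {η : ℝ} (h0 : 0 < η) (h1 : η ≤ 1) (y : ℝ) :
    Int.fract y - 1 / 2 ≤
      (periodicBernoulliTwo y - periodicBernoulliTwo (y - η)) / (2 * η) + η / 2 := by
  have hu := Int.fract_nonneg y
  have hu1 := Int.fract_lt_one y
  unfold periodicBernoulliTwo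
  rw [fract_sub_eq h0.le h1]
  set u := Int.fract y
  have : u - 1 / 2 - η / 2 ≤
    (u ^ 2 - u + 1 / 6 - ((u - η + if u < η then 1 else 0) ^ 2 - (u - η + if u < η then 1 else 0)
      + 1 / 6)) / (2 * η) := by
    rw [le_div_iff₀ (by positivity)]
    split_ifs <;> nlinarith
  linarith

theorem le_fract_sub_half {η : ℝ} (h0 : 0 < η) (h1 : η ≤ 1) (y : ℝ) :
    (periodicBernoulliTwo (y + η) - periodicBernoulliTwo y) / (2 * η) - η / 2 ≤
      Int.fract y - 1 / 2 := by
  have hu := Int.fract_nonneg y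
  have hu1 := Int.fract_lt_one y
  have hv : Int.fract (y + η) = Int.fract y + η - if 1 ≤ Int.fract y + η then 1 else 0 := by
    rw [Int.fract_eq_iff]
    refine ⟨?_, ?_, ?_⟩
    · split_ifs <;> linarith
    · split_ifs <;> linarith
    · refine ⟨⌊y⌋ + if 1 ≤ Int.fract y + η then 1 else 0, ?_⟩
      have := Int.floor_add_fract y
      push_cast
      split_ifs <;> linarith
  unfold periodicBernoulliTwo
  rw [hv]
  set u := Int.fract y
  have : ((u + η - if 1 ≤ u + η then 1 else 0) ^ 2 - (u + η - if 1 ≤ u + η then 1 else 0)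
      + 1 / 6 - (u ^ 2 - u + 1 / 6)) / (2 * η) ≤ u - 1 / 2 + η / 2 := by
    rw [div_le_iff₀ (by positivity)]
    split_ifs <;> nlinarith
  linarith

theorem hasSum_periodicBernoulliTwo (y : ℝ) :
    HasSum (fun n : ℕ => 1 / (Real.pi ^ 2 * (n : ℝ) ^ 2) * Real.cos (2 * Real.pi * (n * y)))
      (periodicBernoulliTwo y) := by
  have h := hasSum_one_div_nat_pow_mul_cos (k := 1) one_ne_zero
    (x := Int.fract y) ⟨Int.fract_nonneg y, (Int.fract_lt_one y).le⟩
  have h2 := h.mul_left (1 / Real.pi ^ 2)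
  convert! h2 using 1
  · funext n
    have : Real.cos (2 * Real.pi * (n * y)) = Real.cos (2 * Real.pi * n * Int.fract y) := by
      rw [← Int.self_sub_floor, ← Real.cos_sub_int_mul_two_pi _ (n * ⌊y⌋)]
      congr 1
      push_cast
      ring
    rw [this]
    have := Real.pi_pos
    field_simp
  · have := Real.pi_pos.ne'
    have hb : Polynomial.eval (Int.fract y) (Polynomial.map (algebraMap ℚ ℝ)
        (Polynomial.bernoulli 2)) = periodicBernoulliTwo y := by
      simp [Polynomial.bernoulli_def, Finset.sum_range_succ, periodicBernoulliTwo, bernoulli_one,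
        bernoulli_two]
      ring
    norm_num [hb]
    field_simp

/-- The additive character `θ ↦ exp (2πiθ)`. -/
def expTwoPi (θ : ℝ) : ℂ := Complex.exp ((2 * Real.pi * θ : ℝ) * Complex.I)

theorem norm_expTwoPi (θ : ℝ) : ‖expTwoPi θ‖ = 1 := Complex.norm_exp_ofReal_mul_I _

theorem expTwoPi_add (a b : ℝ) : expTwoPi (a + b) = expTwoPi a * expTwoPi b := by
  rw [expTwoPi, expTwoPi, expTwoPi, ← Complex.exp_add]
  congr 1
  push_cast
  ring

theorem expTwoPi_re (θ : ℝ) : (expTwoPi θ).re = Real.cos (2 * Real.pi * θ) :=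
  Complex.exp_ofReal_mul_I_re _

theorem norm_expTwoPi_sub_one_le (θ : ℝ) : ‖expTwoPi θ - 1‖ ≤ 2 * Real.pi * |θ| := by
  have := Real.norm_exp_I_mul_ofReal_sub_one_le (x := 2 * Real.pi * θ)
  rw [mul_comm Complex.I] at this
  refine this.trans ?_
  rw [Real.norm_eq_abs, abs_mul, abs_of_pos Real.two_pi_pos]

/-- The size `min (1/n) (A/n²)` of the Fourier coefficients of a sawtooth smoothed at
scale `1/A`. -/
def sawCoeff (A : ℝ) (n : ℕ) : ℝ := min (1 / (n : ℝ)) (A / (n : ℝ) ^ 2)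

theorem sawCoeff_nonneg {A : ℝ} (hA : 0 ≤ A) (n : ℕ) : 0 ≤ sawCoeff A n :=
  le_min (by positivity) (by positivity)

theorem summable_sawCoeff {A : ℝ} (hA : 0 ≤ A) : Summable (sawCoeff A) := by
  refine Summable.of_nonneg_of_le (sawCoeff_nonneg hA) (fun n => min_le_right _ _) ?_
  simp_rw [div_eq_mul_inv]
  exact (Real.summable_nat_pow_inv.2 one_lt_two).mul_left A

/-- Weighted exponential sum. -/
def expSum {ι : Type*} (s : Finset ι) (W y : ι → ℝ) (n : ℕ) : ℂ :=
  ∑ k ∈ s, (W k : ℂ) * expTwoPi (n * y k)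

theorem norm_expSum_le {ι : Type*} (s : Finset ι) (W y : ι → ℝ) (hW : ∀ k ∈ s, 0 ≤ W k) (n : ℕ) :
    ‖expSum s W y n‖ ≤ ∑ k ∈ s, W k := by
  refine (norm_sum_le _ _).trans (Finset.sum_le_sum fun k hk => ?_)
  rw [norm_mul, norm_expTwoPi, mul_one, Complex.norm_real, Real.norm_of_nonneg (hW k hk)]

theorem norm_expSum_sub_const {ι : Type*} (s : Finset ι) (W y : ι → ℝ) (c : ℝ) (n : ℕ) :
    ‖expSum s W (fun k => y k - c) n‖ = ‖expSum s W y n‖ := by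
  have : expSum s W (fun k => y k - c) n = expTwoPi (-(n * c)) * expSum s W y n := by
    unfold expSum
    rw [Finset.mul_sum]
    refine Finset.sum_congr rfl fun k _ => ?_
    rw [show (n : ℝ) * (y k - c) = -(n * c) + n * y k by ring, expTwoPi_add]
    ring
  rw [this, norm_mul, norm_expTwoPi, one_mul]

theorem summable_sawCoeff_mul_norm_expSum {ι : Type*} (s : Finset ι) (W y : ι → ℝ)
    (hW : ∀ k ∈ s, 0 ≤ W k) {A : ℝ} (hA : 0 ≤ A) :
    Summable fun n => sawCoeff A n * ‖expSum s W y n‖ := by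
  refine Summable.of_nonneg_of_le
    (fun n => mul_nonneg (sawCoeff_nonneg hA n) (norm_nonneg _))
    (fun n => mul_le_mul_of_nonneg_left (norm_expSum_le s W y hW n) (sawCoeff_nonneg hA n)) ?_
  exact (summable_sawCoeff hA).mul_right _

theorem abs_sum_bernoulli_diff_le {ι : Type*} (s : Finset ι) (W y : ι → ℝ)
    (hW : ∀ k ∈ s, 0 ≤ W k) {A η : ℝ} (hA : 1 ≤ A) (hη : |η| = 1 / A) :
    |∑ k ∈ s, W k * ((periodicBernoulliTwo (y k + η) - periodicBernoulliTwo (y k)) * (A / 2))| ≤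
      ∑' n, sawCoeff A n * ‖expSum s W y n‖ := by
  have hs := summable_sawCoeff_mul_norm_expSum s W y hW (A := A) (by linarith)
  have hsum : HasSum (fun n : ℕ => A / 2 * (1 / (Real.pi ^ 2 * (n : ℝ) ^ 2)) *
      ((expTwoPi (n * η) - 1) * expSum s W y n).re)
      (∑ k ∈ s, W k * ((periodicBernoulliTwo (y k + η) - periodicBernoulliTwo (y k)) * (A / 2))) := by
    have h := hasSum_sum (s := s) fun k _ =>
      (((hasSum_periodicBernoulliTwo (y k + η)).sub
        (hasSum_periodicBernoulliTwo (y k))).mul_right (A / 2)).mul_left (W k)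
    convert! h using 1
    funext n
    rw [expSum, Finset.mul_sum, Complex.re_sum, Finset.mul_sum]
    refine Finset.sum_congr rfl fun k _ => ?_
    rw [show (expTwoPi (n * η) - 1) * ((W k : ℂ) * expTwoPi (n * y k)) =
      (W k : ℂ) * (expTwoPi (n * (y k + η)) - expTwoPi (n * y k)) by
        rw [mul_add, expTwoPi_add]; ring, Complex.re_ofReal_mul, Complex.sub_re, expTwoPi_re,
        expTwoPi_re]
    ring
  rw [← hsum.tsum_eq, ← Real.norm_eq_abs]
  refine tsum_of_norm_bounded hs.hasSum fun n => ?_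
  rw [norm_mul, Real.norm_of_nonneg (by positivity), Real.norm_eq_abs]
  refine (mul_le_mul_of_nonneg_left (Complex.abs_re_le_norm _) (by positivity)).trans ?_
  rw [norm_mul, ← mul_assoc]
  refine mul_le_mul_of_nonneg_right ?_ (norm_nonneg _)
  rcases Nat.eq_zero_or_pos n with rfl | hn
  · simp [sawCoeff]
  have hn' : (0 : ℝ) < n := by exact_mod_cast hn
  have hpi := Real.pi_gt_three
  have hA0 : 0 < A := by linarith
  refine le_min ?_ ?_
  · calc _ ≤ A / 2 * (1 / (Real.pi ^ 2 * (n : ℝ) ^ 2)) * (2 * Real.pi * (n * (1 / A))) := by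
          gcongr
          refine (norm_expTwoPi_sub_one_le _).trans ?_
          rw [abs_mul, hη, abs_of_pos hn']
      _ = 1 / (Real.pi * n) := by field_simp
      _ ≤ 1 / n := by gcongr; nlinarith
  · calc _ ≤ A / 2 * (1 / (Real.pi ^ 2 * (n : ℝ) ^ 2)) * 2 := by
          gcongr
          refine (norm_sub_le _ _).trans ?_
          rw [norm_expTwoPi]; norm_num
      _ = A / (Real.pi ^ 2 * n ^ 2) := by field_simp
      _ ≤ A / n ^ 2 := by gcongr; exact le_mul_of_one_le_left (by positivity) (by nlinarith)

theorem abs_sum_fract_sub_half_le {ι : Type*} (s : Finset ι) (W y : ι → ℝ)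
    (hW : ∀ k ∈ s, 0 ≤ W k) {A : ℝ} (hA : 1 ≤ A) :
    |∑ k ∈ s, W k * (Int.fract (y k) - 1 / 2)| ≤
      (∑ k ∈ s, W k) / A + ∑' n, sawCoeff A n * ‖expSum s W y n‖ := by
  have hA0 : 0 < A := by linarith
  have hη0 : 0 < 1 / A := by positivity
  have hη1 : 1 / A ≤ 1 := by rw [div_le_one hA0]; exact hA
  have hWs : 0 ≤ (∑ k ∈ s, W k) / A := div_nonneg (Finset.sum_nonneg hW) hA0.le
  have h1 := abs_le.1 (abs_sum_bernoulli_diff_le s W y hW hA (η := 1 / A) (abs_of_pos hη0))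
  have h2 := abs_le.1 (abs_sum_bernoulli_diff_le s W y hW hA (η := -(1 / A))
    (by rw [abs_neg, abs_of_pos hη0]))
  have hmean : ∑ k ∈ s, W k * ((1 / A) / 2) = (∑ k ∈ s, W k) / A / 2 := by
    rw [← Finset.sum_mul]; ring
  rw [abs_le]
  constructor
  · have : ∑ k ∈ s, W k *
        ((periodicBernoulliTwo (y k + 1 / A) - periodicBernoulliTwo (y k)) * (A / 2)) -
        ∑ k ∈ s, W k * ((1 / A) / 2) ≤ ∑ k ∈ s, W k * (Int.fract (y k) - 1 / 2) := by
      rw [← Finset.sum_sub_distrib]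
      refine Finset.sum_le_sum fun k hk => ?_
      rw [← mul_sub]
      refine mul_le_mul_of_nonneg_left ?_ (hW k hk)
      refine le_trans (le_of_eq ?_) (le_fract_sub_half hη0 hη1 (y k))
      field_simp
    linarith [h1.1]
  · have : ∑ k ∈ s, W k * (Int.fract (y k) - 1 / 2) ≤ -(∑ k ∈ s, W k *
        ((periodicBernoulliTwo (y k + -(1 / A)) - periodicBernoulliTwo (y k)) * (A / 2))) +
        ∑ k ∈ s, W k * ((1 / A) / 2) := by
      rw [← Finset.sum_neg_distrib, ← Finset.sum_add_distrib]
      refine Finset.sum_le_sum fun k hk => ?_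
      rw [← mul_neg, ← mul_add]
      refine mul_le_mul_of_nonneg_left ?_ (hW k hk)
      refine (fract_sub_half_le hη0 hη1 (y k)).trans (le_of_eq ?_)
      rw [← sub_eq_add_neg]
      field_simp
      ring
    linarith [h2.1]

theorem ite_fract_lt_sub {x : ℝ} (h0 : 0 < x) (h1 : x ≤ 1) (y : ℝ) :
    (if Int.fract y < x then (1 : ℝ) else 0) - x = Int.fract (y - x) - Int.fract y := by
  rw [fract_sub_eq h0.le h1]; ring

/-- An Erdős–Turán type inequality for nonnegative weights. -/
theorem abs_weighted_discrepancy_le {ι : Type*} (s : Finset ι) (W y : ι → ℝ)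
    (hW : ∀ k ∈ s, 0 ≤ W k) {A x : ℝ} (hA : 1 ≤ A) (h0 : 0 < x) (h1 : x ≤ 1) :
    |∑ k ∈ s, W k * ((if Int.fract (y k) < x then (1 : ℝ) else 0) - x)| ≤
      2 * ((∑ k ∈ s, W k) / A + ∑' n, sawCoeff A n * ‖expSum s W y n‖) := by
  have e1 := abs_sum_fract_sub_half_le s W y hW hA
  have e2 := abs_sum_fract_sub_half_le s W (fun k => y k - x) hW hA
  simp_rw [norm_expSum_sub_const] at e2
  have : ∑ k ∈ s, W k * ((if Int.fract (y k) < x then (1 : ℝ) else 0) - x) =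
      ∑ k ∈ s, W k * (Int.fract (y k - x) - 1 / 2) - ∑ k ∈ s, W k * (Int.fract (y k) - 1 / 2) := by
    rw [← Finset.sum_sub_distrib]
    refine Finset.sum_congr rfl fun k _ => ?_
    rw [ite_fract_lt_sub h0 h1]; ring
  rw [this]
  refine (abs_sub _ _).trans ?_
  linarith

open Polynomial in
/-- The polynomial `1 + X + ⋯ + X ^ (m - 1)`. -/
def geomPoly (m : ℕ) : ℝ[X] := ∑ t ∈ range m, X ^ t

open Polynomial in
theorem geomPoly_mul (m : ℕ) : geomPoly m * (1 - X) = 1 - X ^ m := geom_sum_mul_neg X m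

open Polynomial in
theorem geomPoly_mul_one_sub_pow (N m : ℕ) :
    geomPoly N * (1 - X ^ m) = geomPoly m * (1 - X ^ N) := by
  rw [← geomPoly_mul m, ← geomPoly_mul N]; ring

open Polynomial in
theorem geomPoly_double (m : ℕ) : geomPoly (m * 2) = geomPoly m * (1 + X ^ m) := by
  have h : geomPoly (m * 2) * (1 - X) = geomPoly m * (1 + X ^ m) * (1 - X) := by
    rw [geomPoly_mul, mul_right_comm, geomPoly_mul]; ring
  refine mul_right_cancel₀ (fun h0 => ?_) h
  have := congrArg (fun p => p.coeff 0) h0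
  simp at this

open Polynomial in
/-- The normalised polynomial of the dyadic interval `[0, 2 ^ j)`. -/
def dyadicAvg (j : ℕ) : ℝ[X] := C (1 / 2 ^ j) * geomPoly (2 ^ j)

open Polynomial in
theorem dyadicAvg_zero : dyadicAvg 0 = 1 := by simp [dyadicAvg, geomPoly]

open Polynomial in
theorem dyadicAvg_sub_succ (j : ℕ) :
    dyadicAvg j - dyadicAvg (j + 1) = C (1 / 2) * dyadicAvg j * (1 - X ^ 2 ^ j) := by
  have h2 : C (1 / 2 ^ (j + 1) : ℝ) = C (1 / 2) * C (1 / 2 ^ j) := by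
    rw [← C_mul]; congr 1; field_simp; ring
  have h3 : (C (1 / 2) + C (1 / 2) : ℝ[X]) = 1 := by
    rw [← C_add]; norm_num
  unfold dyadicAvg
  rw [h2, pow_succ 2 j, geomPoly_double]
  linear_combination (-(C (1 / 2 ^ j) * geomPoly (2 ^ j))) * h3

open Polynomial in
/-- A smooth bump at scale `2 ^ j`. -/
def bumpPoly (j : ℕ) : ℝ[X] :=
  C (1 / 2) * (dyadicAvg j * (dyadicAvg j ^ 2 + dyadicAvg j * dyadicAvg (j + 1) +
    dyadicAvg (j + 1) ^ 2) * geomPoly (2 ^ j))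

open Polynomial in
theorem geomPoly_eq_sum_bump (N J : ℕ) :
    geomPoly N = geomPoly N * dyadicAvg J ^ 3 + ∑ j ∈ range J, bumpPoly j * (1 - X ^ N) := by
  induction J with
  | zero => simp [dyadicAvg_zero]
  | succ J ih =>
    rw [Finset.sum_range_succ]
    have h : geomPoly N * dyadicAvg J ^ 3 - geomPoly N * dyadicAvg (J + 1) ^ 3 =
        bumpPoly J * (1 - X ^ N) := by
      unfold bumpPoly
      linear_combination geomPoly N * (dyadicAvg J ^ 2 + dyadicAvg J * dyadicAvg (J + 1) +
        dyadicAvg (J + 1) ^ 2) * dyadicAvg_sub_succ J + C (1 / 2) * dyadicAvg J *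
        (dyadicAvg J ^ 2 + dyadicAvg J * dyadicAvg (J + 1) +
        dyadicAvg (J + 1) ^ 2) * geomPoly_mul_one_sub_pow N (2 ^ J)
    linear_combination ih + h

open Polynomial in
/-- The pieces of the decomposition of the interval `[1, N]`: bumps at both endpoints at the
scales `2 ^ j`, `j < J`, and a smooth remainder at scale `2 ^ J`. -/
def pieceWeight (N J : ℕ) (a : ℕ × Bool) : ℝ[X] :=
  if a.1 < J then bumpPoly a.1 * X ^ (1 + if a.2 then N else 0)
  else if a.2 then 0 else X * (geomPoly N * dyadicAvg J ^ 3)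

/-- The sign of a piece. -/
def pieceSign (a : ℕ × Bool) : ℝ := if a.2 then -1 else 1

open Polynomial in
theorem X_mul_geomPoly_eq_sum (N J : ℕ) :
    X * geomPoly N = ∑ a ∈ range (J + 1) ×ˢ (univ : Finset Bool),
      C (pieceSign a) * pieceWeight N J a := by
  rw [Finset.sum_product, Finset.sum_range_succ]
  have : ∀ j ∈ range J, ∑ b : Bool, C (pieceSign (j, b)) * pieceWeight N J (j, b) =
      X * (bumpPoly j * (1 - X ^ N)) := by
    intro j hj
    have := Finset.mem_range.1 hj
    simp [pieceSign, pieceWeight, this]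
    ring
  rw [Finset.sum_congr rfl this, ← Finset.mul_sum]
  simp [pieceSign, pieceWeight]
  linear_combination X * geomPoly_eq_sum_bump N J

open Polynomial in
theorem coeff_mul_nonneg {p q : ℝ[X]} (hp : ∀ k, 0 ≤ p.coeff k) (hq : ∀ k, 0 ≤ q.coeff k) (k : ℕ) :
    0 ≤ (p * q).coeff k := by
  rw [coeff_mul]
  exact Finset.sum_nonneg fun _ _ => mul_nonneg (hp _) (hq _)

open Polynomial in
theorem coeff_X_pow_nonneg (n k : ℕ) : 0 ≤ (X ^ n : ℝ[X]).coeff k := by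
  rw [coeff_X_pow]; split_ifs <;> norm_num

open Polynomial in
theorem coeff_C_nonneg {c : ℝ} (hc : 0 ≤ c) (k : ℕ) : 0 ≤ (C c).coeff k := by
  rw [coeff_C]; split_ifs <;> simp [hc]

theorem coeff_geomPoly_nonneg (m k : ℕ) : 0 ≤ (geomPoly m).coeff k := by
  rw [geomPoly, Polynomial.finsetSum_coeff]
  exact Finset.sum_nonneg fun _ _ => coeff_X_pow_nonneg _ _

theorem coeff_dyadicAvg_nonneg (j k : ℕ) : 0 ≤ (dyadicAvg j).coeff k :=
  coeff_mul_nonneg (coeff_C_nonneg (by positivity)) (coeff_geomPoly_nonneg _) k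

theorem coeff_pieceWeight_nonneg (N J : ℕ) (a : ℕ × Bool) (k : ℕ) :
    0 ≤ (pieceWeight N J a).coeff k := by
  have hd := coeff_dyadicAvg_nonneg
  have hg := coeff_geomPoly_nonneg
  have hd2 : ∀ j k, 0 ≤ (dyadicAvg j ^ 2).coeff k := fun j => by
    rw [pow_two]; exact coeff_mul_nonneg (hd j) (hd j)
  unfold pieceWeight
  by_cases h1 : a.1 < J
  · rw [if_pos h1]
    refine coeff_mul_nonneg ?_ (coeff_X_pow_nonneg _) k
    refine coeff_mul_nonneg (coeff_C_nonneg (by norm_num)) (coeff_mul_nonneg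
      (coeff_mul_nonneg (hd _) fun i => ?_) (hg _))
    rw [Polynomial.coeff_add, Polynomial.coeff_add]
    exact add_nonneg (add_nonneg (hd2 _ _) (coeff_mul_nonneg (hd _) (hd _) _)) (hd2 _ _)
  · rw [if_neg h1]
    split_ifs with h2
    · simp
    · refine coeff_mul_nonneg (fun i => ?_) (coeff_mul_nonneg (hg _) fun i => ?_) k
      · simpa using coeff_X_pow_nonneg 1 i
      · rw [pow_succ]
        exact coeff_mul_nonneg (hd2 _) (hd _) i

theorem norm_aeval_geomPoly_le {z : ℂ} (hz : ‖z‖ = 1) (m : ℕ) :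
    ‖Polynomial.aeval z (geomPoly m)‖ ≤ m := by
  rw [geomPoly, map_sum]
  refine (norm_sum_le _ _).trans ?_
  simp [hz]

theorem norm_aeval_geomPoly_mul_le {z : ℂ} (hz : ‖z‖ = 1) (m : ℕ) :
    ‖Polynomial.aeval z (geomPoly m)‖ * ‖z - 1‖ ≤ 2 := by
  have h := congrArg (Polynomial.aeval z) (geomPoly_mul m)
  simp only [map_mul, map_sub, map_one, map_pow, Polynomial.aeval_X] at h
  rw [← norm_neg (z - 1), neg_sub, ← norm_mul, h]
  refine (norm_sub_le _ _).trans ?_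
  rw [norm_pow, hz]; norm_num

theorem norm_aeval_dyadicAvg {z : ℂ} (j : ℕ) :
    ‖Polynomial.aeval z (dyadicAvg j)‖ = ‖Polynomial.aeval z (geomPoly (2 ^ j))‖ / 2 ^ j := by
  rw [dyadicAvg, map_mul, norm_mul, Polynomial.aeval_C]
  simp
  field_simp

theorem norm_aeval_dyadicAvg_le {z : ℂ} (hz : ‖z‖ = 1) (j : ℕ) :
    ‖Polynomial.aeval z (dyadicAvg j)‖ ≤ 1 := by
  rw [norm_aeval_dyadicAvg, div_le_one (by positivity)]
  exact_mod_cast norm_aeval_geomPoly_le hz (2 ^ j)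

theorem norm_aeval_dyadicAvg_mul_le {z : ℂ} (hz : ‖z‖ = 1) {i j : ℕ} (hij : i ≤ j) :
    ‖Polynomial.aeval z (dyadicAvg j)‖ * (2 ^ i * ‖z - 1‖) ≤ 2 := by
  rw [norm_aeval_dyadicAvg]
  have h := norm_aeval_geomPoly_mul_le hz (2 ^ j)
  have h2 : (2 : ℝ) ^ i / 2 ^ j ≤ 1 :=
    (div_le_one (by positivity)).2 (pow_le_pow_right₀ one_le_two hij)
  calc _ = (‖Polynomial.aeval z (geomPoly (2 ^ j))‖ * ‖z - 1‖) * (2 ^ i / 2 ^ j) := by ring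
    _ ≤ 2 * 1 := by gcongr
    _ = 2 := by norm_num

theorem mul_le_five_div {a b u : ℝ} (hb : 0 ≤ b) (hu : 0 ≤ u) (ha1 : a ≤ 1)
    (hb1 : b ≤ 1) (hau : a * u ≤ 2) (hbu : b * u ≤ 2) : a * b ≤ 5 / (1 + u ^ 2) := by
  rw [le_div_iff₀ (by positivity)]
  have h1 : a * b ≤ 1 := mul_le_one₀ ha1 hb hb1
  have h2 : (a * u) * (b * u) ≤ 2 * 2 := by gcongr
  nlinarith

/-- The localising kernel at scale `2 ^ j`. -/
def locKernel (j : ℕ) (θ : ℝ) : ℝ := 2 ^ j / (1 + (2 ^ j * ‖expTwoPi θ - 1‖) ^ 2)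

theorem locKernel_nonneg (j : ℕ) (θ : ℝ) : 0 ≤ locKernel j θ := by
  unfold locKernel; positivity

theorem norm_aeval_pieceWeight_le (N : ℕ) (hN : N ≠ 0) {a : ℕ × Bool}
    (ha : a.1 ∈ range (Nat.log 2 N + 1)) (θ : ℝ) :
    ‖Polynomial.aeval (expTwoPi θ) (pieceWeight N (Nat.log 2 N) a)‖ ≤
      50 * (locKernel a.1 θ ^ 2 / 2 ^ a.1) := by
  obtain ⟨j, b⟩ := a
  set J := Nat.log 2 N
  have hz := norm_expTwoPi θ
  simp only at ha ⊢
  set z := expTwoPi θ with hzdef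
  have hjJ : j ≤ J := Nat.lt_succ_iff.1 (Finset.mem_range.1 ha)
  set u := 2 ^ j * ‖z - 1‖ with hu
  have hu0 : 0 ≤ u := by positivity
  have hrhs : 50 * (locKernel j θ ^ 2 / 2 ^ j) = 2 * 2 ^ j * ((5 / (1 + u ^ 2)) * (5 / (1 + u ^ 2))) := by
    unfold locKernel; rw [← hzdef, ← hu]; field_simp; ring
  rw [hrhs]
  have hF : ∀ i, j ≤ i → ‖Polynomial.aeval z (dyadicAvg i)‖ ≤ 1 ∧
      ‖Polynomial.aeval z (dyadicAvg i)‖ * u ≤ 2 := fun i hi =>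
    ⟨norm_aeval_dyadicAvg_le hz i, norm_aeval_dyadicAvg_mul_le hz hi⟩
  have hFF : ∀ i k, j ≤ i → j ≤ k → ‖Polynomial.aeval z (dyadicAvg i)‖ *
      ‖Polynomial.aeval z (dyadicAvg k)‖ ≤ 5 / (1 + u ^ 2) := fun i k hi hk =>
    mul_le_five_div (norm_nonneg _) hu0 (hF i hi).1 (hF k hk).1 (hF i hi).2
      (hF k hk).2
  unfold pieceWeight
  by_cases h1 : j < J
  · rw [if_pos h1]
    rw [map_mul, norm_mul, map_pow, norm_pow, Polynomial.aeval_X, hz, one_pow, mul_one, bumpPoly]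
    have hg : ‖Polynomial.aeval z (geomPoly (2 ^ j))‖ =
        2 ^ j * ‖Polynomial.aeval z (dyadicAvg j)‖ := by
      rw [norm_aeval_dyadicAvg]; field_simp
    simp only [map_mul, map_add, map_pow, norm_mul, hg, Polynomial.aeval_C]
    set f := Polynomial.aeval z (dyadicAvg j) with hf
    set g := Polynomial.aeval z (dyadicAvg (j + 1)) with hgdef
    have e1 := hFF j j le_rfl le_rfl
    have e2 := hFF j (j + 1) le_rfl (Nat.le_succ j)
    have e3 := hFF (j + 1) (j + 1) (Nat.le_succ j) (Nat.le_succ j)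
    rw [← hf] at e1 e2
    rw [← hgdef] at e2 e3
    have e4 : ‖f ^ 2 + f * g + g ^ 2‖ ≤ 3 * (5 / (1 + u ^ 2)) := by
      refine (norm_add_le _ _).trans ?_
      refine (add_le_add_left (norm_add_le _ _) _).trans ?_
      rw [norm_mul, pow_two, pow_two, norm_mul, norm_mul]
      linarith
    have e5 : ‖(algebraMap ℝ ℂ) (1 / 2)‖ = 1 / 2 := by
      simp
    rw [e5]
    calc 1 / 2 * (‖f‖ * ‖f ^ 2 + f * g + g ^ 2‖ * (2 ^ j * ‖f‖))
        = 1 / 2 * 2 ^ j * (‖f‖ * ‖f‖) * ‖f ^ 2 + f * g + g ^ 2‖ := by ring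
      _ ≤ 1 / 2 * 2 ^ j * (5 / (1 + u ^ 2)) * (3 * (5 / (1 + u ^ 2))) := by gcongr
      _ = 3 / 2 * (2 ^ j * ((5 / (1 + u ^ 2)) * (5 / (1 + u ^ 2)))) := by ring
      _ ≤ 2 * (2 ^ j * ((5 / (1 + u ^ 2)) * (5 / (1 + u ^ 2)))) := by gcongr; norm_num
      _ = _ := by ring
  · rw [if_neg h1]
    split_ifs with h2
    · simp; positivity
    · have hj : j = J := le_antisymm hjJ (not_lt.1 h1)
      subst hj
      have hNpos : (0 : ℝ) < N := by exact_mod_cast Nat.pos_of_ne_zero hN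
      have hNle : (2 : ℝ) ^ J ≤ N := by exact_mod_cast Nat.pow_log_le_self 2 hN
      have hNlt : (N : ℝ) ≤ 2 * 2 ^ J := by
        have : N < 2 ^ (J + 1) := Nat.lt_pow_succ_log_self one_lt_two N
        have h : (N : ℝ) < 2 ^ (J + 1) := by exact_mod_cast this
        rw [pow_succ] at h; linarith
      have hg1 := norm_aeval_geomPoly_le hz N
      have hg2 := norm_aeval_geomPoly_mul_le hz N
      simp only [map_mul, map_pow, norm_mul, norm_pow, Polynomial.aeval_X, hz, one_mul]
      set g := ‖Polynomial.aeval z (geomPoly N)‖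
      have e1 := hFF J J le_rfl le_rfl
      have e2 : g / N * ‖Polynomial.aeval z (dyadicAvg J)‖ ≤ 5 / (1 + u ^ 2) := by
        refine mul_le_five_div (norm_nonneg _) hu0 ((div_le_one hNpos).2 hg1)
          (hF J le_rfl).1 ?_ (hF J le_rfl).2
        calc g / N * u = (g * ‖z - 1‖) * (2 ^ J / N) := by rw [hu]; ring
          _ ≤ 2 * 1 := by
            gcongr
            exact (div_le_one hNpos).2 hNle
          _ = 2 := by norm_num
      set f := ‖Polynomial.aeval z (dyadicAvg J)‖
      calc g * f ^ 3 = N * ((g / N * f) * (f * f)) := by field_simp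
        _ ≤ (2 * 2 ^ J) * ((5 / (1 + u ^ 2)) * (5 / (1 + u ^ 2))) := by gcongr

theorem coeff_X_mul_geomPoly (N k : ℕ) :
    (Polynomial.X * geomPoly N).coeff k = if k ∈ Icc 1 N then 1 else 0 := by
  cases k with
  | zero => simp
  | succ k =>
    rw [Polynomial.coeff_X_mul, geomPoly, Polynomial.finsetSum_coeff]
    simp only [Polynomial.coeff_X_pow, Finset.sum_ite_eq, Finset.mem_range, Finset.mem_Icc]
    exact if_congr (by lia) rfl rfl

theorem ite_mem_Icc_eq_sum (N J k : ℕ) :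
    (if k ∈ Icc 1 N then (1 : ℝ) else 0) = ∑ a ∈ range (J + 1) ×ˢ (univ : Finset Bool),
      pieceSign a * (pieceWeight N J a).coeff k := by
  rw [← coeff_X_mul_geomPoly, X_mul_geomPoly_eq_sum N J, Polynomial.finsetSum_coeff]
  simp [Polynomial.coeff_C_mul]

theorem abs_pieceSign (a : ℕ × Bool) : |pieceSign a| = 1 := by
  unfold pieceSign; split_ifs <;> simp

theorem expTwoPi_sum {ι : Type*} (s : Finset ι) (f : ι → ℝ) :
    expTwoPi (∑ i ∈ s, f i) = ∏ i ∈ s, expTwoPi (f i) := by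
  classical
  induction s using Finset.induction_on with
  | empty => simp [expTwoPi]
  | insert a s ha ih => rw [Finset.sum_insert ha, Finset.prod_insert ha, expTwoPi_add, ih]

theorem expTwoPi_nat_mul (k : ℕ) (θ : ℝ) : expTwoPi (k * θ) = expTwoPi θ ^ k := by
  rw [expTwoPi, expTwoPi, ← Complex.exp_nat_mul]
  congr 1
  push_cast
  ring

theorem expSum_linearForm {d M : ℕ} (p : Fin d → Polynomial ℝ) (hM : ∀ i, (p i).natDegree < M)
    (α : Fin d → ℝ) (n : ℕ) :
    expSum (Fintype.piFinset fun _ : Fin d => range M) (fun k => ∏ i, (p i).coeff (k i))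
      (fun k => ∑ i, (k i : ℝ) * α i) n =
    ∏ i, Polynomial.aeval (expTwoPi (n * α i)) (p i) := by
  rw [Finset.prod_congr rfl fun i _ =>
    Polynomial.aeval_eq_sum_range' (hM i) (expTwoPi (n * α i)), Finset.prod_univ_sum, expSum]
  refine Finset.sum_congr rfl fun k _ => ?_
  rw [Finset.mul_sum, expTwoPi_sum, Complex.ofReal_prod, ← Finset.prod_mul_distrib]
  refine Finset.prod_congr rfl fun i _ => ?_
  rw [← expTwoPi_nat_mul, Complex.real_smul]
  congr 2
  ring

/-- The product of the localising kernels along a linear form. -/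
def locProd {d : ℕ} (j : Fin d → ℕ) (n : ℕ) (α : Fin d → ℝ) : ℝ :=
  ∏ i, locKernel (j i) (n * α i)

theorem locProd_nonneg {d : ℕ} (j : Fin d → ℕ) (n : ℕ) (α : Fin d → ℝ) : 0 ≤ locProd j n α :=
  Finset.prod_nonneg fun _ _ => locKernel_nonneg _ _

theorem locKernel_le (j : ℕ) (θ : ℝ) : locKernel j θ ≤ 2 ^ j :=
  div_le_self (by positivity) (by nlinarith [sq_nonneg (2 ^ j * ‖expTwoPi θ - 1‖)])

theorem locProd_le {d : ℕ} (j : Fin d → ℕ) (n : ℕ) (α : Fin d → ℝ) :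
    locProd j n α ≤ 2 ^ ∑ i, j i := by
  rw [← Finset.prod_pow_eq_pow_sum]
  exact Finset.prod_le_prod (fun _ _ => locKernel_nonneg _ _) fun _ _ => locKernel_le _ _

theorem summable_sawCoeff_mul_locProd {d : ℕ} (j : Fin d → ℕ) (α : Fin d → ℝ) :
    Summable fun n => sawCoeff (2 ^ ∑ i, j i) n * (locProd j n α ^ 2 / 2 ^ ∑ i, j i) := by
  refine Summable.of_nonneg_of_le
    (fun n => mul_nonneg (sawCoeff_nonneg (by positivity) n) (by positivity))
    (fun n => mul_le_mul_of_nonneg_left (?_ : _ ≤ (2 : ℝ) ^ ∑ i, j i)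
      (sawCoeff_nonneg (by positivity) n)) ((summable_sawCoeff (by positivity)).mul_right _)
  rw [div_le_iff₀ (by positivity), ← pow_two]
  exact pow_le_pow_left₀ (locProd_nonneg _ _ _) (locProd_le _ _ _) 2

/-- Bound for the contribution of the pieces at scales `2 ^ j i`. -/
def pieceBound {d : ℕ} (j : Fin d → ℕ) (α : Fin d → ℝ) : ℝ :=
  ∑' n, sawCoeff (2 ^ ∑ i, j i) n * (locProd j n α ^ 2 / 2 ^ ∑ i, j i)

theorem norm_expSum_pieces_le {d M : ℕ} (p : Fin d → Polynomial ℝ) (j : Fin d → ℕ)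
    (hM : ∀ i, (p i).natDegree < M)
    (hF : ∀ i θ, ‖Polynomial.aeval (expTwoPi θ) (p i)‖ ≤ 50 * (locKernel (j i) θ ^ 2 / 2 ^ j i))
    (α : Fin d → ℝ) (n : ℕ) :
    ‖expSum (Fintype.piFinset fun _ : Fin d => range M) (fun k => ∏ i, (p i).coeff (k i))
      (fun k => ∑ i, (k i : ℝ) * α i) n‖ ≤ 50 ^ d * (locProd j n α ^ 2 / 2 ^ ∑ i, j i) := by
  rw [expSum_linearForm p hM, norm_prod]
  refine (Finset.prod_le_prod (fun _ _ => norm_nonneg _) fun i _ => hF i _).trans_eq ?_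
  rw [Finset.prod_mul_distrib, Finset.prod_div_distrib, Finset.prod_pow,
    Finset.prod_pow_eq_pow_sum, locProd, Finset.prod_const, Finset.card_univ, Fintype.card_fin]

theorem sum_pieces_le {d M : ℕ} (p : Fin d → Polynomial ℝ) (j : Fin d → ℕ)
    (hM : ∀ i, (p i).natDegree < M)
    (hF : ∀ i θ, ‖Polynomial.aeval (expTwoPi θ) (p i)‖ ≤ 50 * (locKernel (j i) θ ^ 2 / 2 ^ j i)) :
    ∑ k ∈ Fintype.piFinset fun _ : Fin d => range M, ∏ i, (p i).coeff (k i) ≤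
      50 ^ d * 2 ^ ∑ i, j i := by
  have h := norm_expSum_pieces_le p j hM hF 0 0
  have hz : locProd j 0 0 = 2 ^ ∑ i, j i := by
    simp [locProd, locKernel, expTwoPi, Finset.prod_pow_eq_pow_sum]
  have hE : expSum (Fintype.piFinset fun _ : Fin d => range M) (fun k => ∏ i, (p i).coeff (k i))
      (fun k => ∑ i, (k i : ℝ) * (0 : Fin d → ℝ) i) 0 =
      ((∑ k ∈ Fintype.piFinset fun _ : Fin d => range M, ∏ i, (p i).coeff (k i) : ℝ) : ℂ) := by
    simp [expSum, expTwoPi]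
  rw [hz, hE, Complex.norm_real, pow_two, mul_div_cancel_right₀ _ (by positivity)] at h
  exact (le_abs_self _).trans h

theorem abs_piece_discrepancy_le {d M : ℕ} (p : Fin d → Polynomial ℝ) (j : Fin d → ℕ)
    (hp : ∀ i k, 0 ≤ (p i).coeff k) (hM : ∀ i, (p i).natDegree < M)
    (hF : ∀ i θ, ‖Polynomial.aeval (expTwoPi θ) (p i)‖ ≤ 50 * (locKernel (j i) θ ^ 2 / 2 ^ j i))
    (α : Fin d → ℝ) {x : ℝ} (h0 : 0 < x) (h1 : x ≤ 1) :
    |∑ k ∈ Fintype.piFinset fun _ : Fin d => range M, (∏ i, (p i).coeff (k i)) *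
      ((if Int.fract (∑ i, (k i : ℝ) * α i) < x then (1 : ℝ) else 0) - x)| ≤
    2 * 50 ^ d * (1 + pieceBound j α) := by
  have hmass := sum_pieces_le p j hM hF
  have hs := (summable_sawCoeff_mul_locProd j α).mul_left (50 ^ d)
  have hE := norm_expSum_pieces_le p j hM hF α
  unfold pieceBound
  have hA1 : (1 : ℝ) ≤ 2 ^ ∑ i, j i := one_le_pow₀ one_le_two
  generalize (2 : ℝ) ^ ∑ i, j i = A at hmass hs hE hA1 ⊢
  have hW : ∀ k ∈ Fintype.piFinset fun _ : Fin d => range M, 0 ≤ ∏ i, (p i).coeff (k i) :=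
    fun k _ => Finset.prod_nonneg fun i _ => hp i _
  have key := abs_weighted_discrepancy_le (Fintype.piFinset fun _ : Fin d => range M)
    (fun k => ∏ i, (p i).coeff (k i)) (fun k => ∑ i, (k i : ℝ) * α i) hW hA1 h0 h1
  refine key.trans ?_
  rw [mul_assoc]
  refine mul_le_mul_of_nonneg_left ?_ zero_le_two
  rw [mul_add, mul_one]
  refine add_le_add ((div_le_iff₀ (by linarith)).2 hmass) ?_
  rw [← tsum_mul_left]
  refine (summable_sawCoeff_mul_norm_expSum _ _ _ hW (zero_le_one.trans hA1)).tsum_le_tsum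
    (fun n => ?_) hs
  rw [mul_left_comm]
  exact mul_le_mul_of_nonneg_left (hE n) (sawCoeff_nonneg (by linarith) n)

/-- The index set of the pieces whose scales are less than `2 ^ m`. -/
def pieceIndex (d m : ℕ) : Finset (Fin d → ℕ × Bool) :=
  Fintype.piFinset fun _ => range m ×ˢ univ

theorem abs_discLF_le {d N : ℕ} (hN : N ≠ 0) (α : Fin d → ℝ) {x : ℝ} (h0 : 0 < x) (h1 : x ≤ 1) :
    |DiscLF d N α x| ≤ ∑ a ∈ pieceIndex d (Nat.log 2 N + 1),
      2 * 50 ^ d * (1 + pieceBound (fun i => (a i).1) α) := by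
  classical
  set J := Nat.log 2 N
  set I := range (J + 1) ×ˢ (univ : Finset Bool) with hI
  obtain ⟨M, hM⟩ : ∃ M, N < M ∧ ∀ a ∈ I, (pieceWeight N J a).natDegree < M := by
    refine ⟨N + (∑ a ∈ I, (pieceWeight N J a).natDegree) + 1, by lia, fun a ha => ?_⟩
    have := Finset.single_le_sum (f := fun a => (pieceWeight N J a).natDegree)
      (fun _ _ => Nat.zero_le _) ha
    lia
  set χ : (Fin d → ℕ) → ℝ := fun k =>
    (if Int.fract (∑ i, (k i : ℝ) * α i) < x then (1 : ℝ) else 0) - x with hχ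
  have hD : DiscLF d N α x = ∑ k ∈ Fintype.piFinset fun _ : Fin d => range M,
      (∏ i, if k i ∈ Icc 1 N then (1 : ℝ) else 0) * χ k := by
    have h : DiscLF d N α x = ∑ k ∈ (Fintype.piFinset fun _ : Fin d => Icc 1 N), χ k := by
      rw [DiscLF, hχ, Finset.sum_sub_distrib]
      simp
    rw [h]
    refine Finset.sum_subset_zero_on_sdiff ?_ ?_ ?_
    · refine Fintype.piFinset_subset _ _ fun i t ht => ?_
      have := Finset.mem_Icc.1 ht
      exact Finset.mem_range.2 (by lia)
    · intro k hk
      have : ∃ i, k i ∉ Icc 1 N := by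
        simpa only [Fintype.mem_piFinset, not_forall] using (Finset.mem_sdiff.1 hk).2
      obtain ⟨i, hi⟩ := this
      rw [Finset.prod_eq_zero (Finset.mem_univ i) (if_neg hi), zero_mul]
    · intro k hk
      rw [Finset.prod_eq_one (fun i _ => if_pos (Fintype.mem_piFinset.1 hk i)), one_mul]
  have hexp : DiscLF d N α x = ∑ a ∈ pieceIndex d (J + 1), (∏ i, pieceSign (a i)) *
      ∑ k ∈ Fintype.piFinset fun _ : Fin d => range M,
        (∏ i, (pieceWeight N J (a i)).coeff (k i)) * χ k := by
    simp_rw [hD, ite_mem_Icc_eq_sum N J, Finset.prod_univ_sum, Finset.sum_mul, Finset.mul_sum]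
    rw [Finset.sum_comm]
    refine Finset.sum_congr rfl fun a _ => Finset.sum_congr rfl fun k _ => ?_
    rw [Finset.prod_mul_distrib, mul_assoc]
  rw [hexp]
  refine (Finset.abs_sum_le_sum_abs _ _).trans (Finset.sum_le_sum fun a ha => ?_)
  have ha' : ∀ i, a i ∈ I := Fintype.mem_piFinset.1 ha
  rw [abs_mul, Finset.abs_prod]
  simp only [abs_pieceSign, Finset.prod_const_one, one_mul]
  exact abs_piece_discrepancy_le (fun i => pieceWeight N J (a i)) (fun i => (a i).1)
    (fun i => coeff_pieceWeight_nonneg N J (a i)) (fun i => hM.2 _ (ha' i))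
    (fun i => norm_aeval_pieceWeight_le N hN (Finset.mem_product.1 (ha' i)).1) α h0 h1

theorem expTwoPi_add_one (θ : ℝ) : expTwoPi (θ + 1) = expTwoPi θ := by
  rw [expTwoPi_add]
  simp [expTwoPi, Complex.exp_two_pi_mul_I]

theorem abs_le_norm_expTwoPi_sub_one {t : ℝ} (ht : |t| ≤ 1 / 2) : |t| ≤ ‖expTwoPi t - 1‖ := by
  have hpi := Real.pi_pos
  have h : ‖expTwoPi t - 1‖ = 2 * |Real.sin (Real.pi * t)| := by
    rw [expTwoPi, mul_comm, Complex.norm_exp_I_mul_ofReal_sub_one, norm_mul, Real.norm_eq_abs,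
      Real.norm_eq_abs, abs_two, show 2 * Real.pi * t / 2 = Real.pi * t by ring]
  have h2 : 2 / Real.pi * (Real.pi * |t|) ≤ Real.sin (Real.pi * |t|) :=
    Real.mul_le_sin (by positivity) (by nlinarith)
  have h3 : |Real.sin (Real.pi * t)| = |Real.sin (Real.pi * |t|)| := by
    rcases abs_choice t with h | h <;> rw [h]
    rw [mul_neg, Real.sin_neg, abs_neg]
  have h4 : 2 / Real.pi * (Real.pi * |t|) = 2 * |t| := by field_simp
  rw [h, h3]
  linarith [le_abs_self (Real.sin (Real.pi * |t|)), abs_nonneg t]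

theorem continuous_expTwoPi : Continuous expTwoPi := by
  unfold expTwoPi; fun_prop

theorem continuous_locKernel (j : ℕ) : Continuous (locKernel j) := by
  unfold locKernel
  refine Continuous.div continuous_const ?_ fun x => by positivity
  have := continuous_expTwoPi
  fun_prop

theorem periodic_locKernel (j : ℕ) : Function.Periodic (locKernel j) 1 := fun θ => by
  unfold locKernel; rw [expTwoPi_add_one]

theorem intervalIntegral_locKernel_le (j : ℕ) (a : ℝ) :
    ∫ x in a..a + 1, locKernel j x ≤ 4 := by
  rw [(periodic_locKernel j).intervalIntegral_add_eq a (-(1 / 2)),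
    show (-(1 / 2) + 1 : ℝ) = 1 / 2 by norm_num]
  have hc : Continuous fun x : ℝ => (2 : ℝ) ^ j * (1 + (2 ^ j * x) ^ 2)⁻¹ :=
    continuous_const.mul (Continuous.inv₀ (by fun_prop) fun x => by positivity)
  calc ∫ x in (-(1 / 2) : ℝ)..(1 / 2), locKernel j x
      ≤ ∫ x in (-(1 / 2) : ℝ)..(1 / 2), 2 ^ j * (1 + (2 ^ j * x) ^ 2)⁻¹ := by
        refine intervalIntegral.integral_mono_on (by norm_num)
          ((continuous_locKernel j).intervalIntegrable _ _) (hc.intervalIntegrable _ _) fun x hx => ?_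
        have hx' := abs_le_norm_expTwoPi_sub_one (abs_le.2 hx)
        unfold locKernel
        rw [div_eq_mul_inv]
        gcongr 2 ^ j * (1 + ?_)⁻¹
        rw [mul_pow, mul_pow, ← sq_abs x]
        gcongr
    _ = Real.arctan (2 ^ j * (1 / 2)) - Real.arctan (2 ^ j * (-(1 / 2))) := by
        rw [intervalIntegral.integral_const_mul,
          intervalIntegral.mul_integral_comp_mul_left (f := fun x => (1 + x ^ 2)⁻¹),
          integral_inv_one_add_sq]
    _ ≤ 4 := by
        linarith [Real.arctan_lt_pi_div_two (2 ^ j * (1 / 2)),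
          Real.neg_pi_div_two_lt_arctan (2 ^ j * (-(1 / 2))), Real.pi_le_four]

theorem setIntegral_locKernel_mul_le (j : ℕ) {n : ℕ} (hn : n ≠ 0) (a : ℝ) :
    ∫ x in Set.Ioc a (a + 1), locKernel j (n * x) ≤ 4 := by
  have hn' : (0 : ℝ) < n := by exact_mod_cast Nat.pos_of_ne_zero hn
  rw [← intervalIntegral.integral_of_le (by linarith),
    intervalIntegral.integral_comp_mul_left _ hn'.ne']
  have h := (periodic_locKernel j).intervalIntegral_add_zsmul_eq n (n * a)
    fun _ _ => (continuous_locKernel j).intervalIntegrable _ _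
  rw [show (n : ℝ) * (a + 1) = n * a + (n : ℤ) • (1 : ℝ) by simp [mul_add], h]
  have h4 := intervalIntegral_locKernel_le j (n * a)
  rw [zsmul_eq_mul, smul_eq_mul, Int.cast_natCast, inv_mul_cancel_left₀ hn'.ne']
  exact h4

theorem continuous_locProd {d : ℕ} (j : Fin d → ℕ) (n : ℕ) : Continuous (locProd j n) := by
  unfold locProd
  refine continuous_finsetProd _ fun i _ => (continuous_locKernel (j i)).comp ?_
  fun_prop

theorem lintegral_locProd_le {d : ℕ} (j : Fin d → ℕ) {n : ℕ} (hn : n ≠ 0) (a : Fin d → ℝ) :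
    ∫⁻ α in Set.univ.pi fun i => Set.Ioc (a i) (a i + 1), ENNReal.ofReal (locProd j n α) ≤
      ENNReal.ofReal (4 ^ d) := by
  rw [volume_pi, Measure.restrict_pi_pi]
  have hprod : Integrable (locProd j n)
      (Measure.pi fun i => volume.restrict (Set.Ioc (a i) (a i + 1))) := by
    refine Integrable.fintype_prod (f := fun i x => locKernel (j i) (n * x)) fun i => ?_
    have hc : Continuous fun x : ℝ => locKernel (j i) (n * x) :=
      (continuous_locKernel (j i)).comp (by fun_prop)
    exact (hc.integrableOn_Icc (a := a i) (b := a i + 1)).mono_set Set.Ioc_subset_Icc_self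
  rw [← ofReal_integral_eq_lintegral_ofReal hprod (ae_of_all _ fun _ => locProd_nonneg _ _ _)]
  refine ENNReal.ofReal_le_ofReal ?_
  unfold locProd
  rw [integral_fintype_prod_eq_prod (fun i x => locKernel (j i) (n * x))]
  refine (Finset.prod_le_prod (fun i _ => integral_nonneg fun x => locKernel_nonneg _ _)
    fun i _ => setIntegral_locKernel_mul_le (j i) hn (a i)).trans_eq ?_
  simp

theorem sum_Ioc_two_pow_inv_le (q l : ℕ) :
    ∑ n ∈ Ioc ((2 : ℕ) ^ q) (2 ^ (q + l)), 1 / (n : ℝ) ≤ l := by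
  induction l with
  | zero => simp
  | succ l ih =>
    have hle : 2 ^ (q + l) ≤ 2 ^ (q + (l + 1)) := Nat.pow_le_pow_right two_pos (by lia)
    rw [← Finset.sum_Ioc_consecutive _ (Nat.pow_le_pow_right two_pos (by lia)) hle]
    have h : ∑ n ∈ Ioc ((2 : ℕ) ^ (q + l)) (2 ^ (q + (l + 1))), 1 / (n : ℝ) ≤ 1 := by
      refine (Finset.sum_le_card_nsmul _ _ (1 / 2 ^ (q + l)) fun n hn => ?_).trans_eq ?_
      · have : (2 : ℝ) ^ (q + l) ≤ n := by exact_mod_cast (Finset.mem_Ioc.1 hn).1.le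
        gcongr
      · rw [Nat.card_Ioc, ← add_assoc, pow_succ, mul_two, Nat.add_sub_cancel, nsmul_eq_mul]
        push_cast
        field_simp
    push_cast
    linarith

theorem sum_sawCoeff_high_le (m r : ℕ) (s : Finset ℕ) (hs : ∀ n ∈ s, 2 ^ m < n * 4 ^ r) :
    ∑ n ∈ s, sawCoeff (2 ^ m) n ≤ 2 * r + 3 := by
  classical
  rw [← Finset.sum_filter_add_sum_filter_not s (fun n => n ≤ 2 ^ m)]
  have h1 : ∑ n ∈ s with n ≤ 2 ^ m, sawCoeff (2 ^ m) n ≤ 1 + 2 * r := by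
    have hsub : (s.filter fun n => n ≤ 2 ^ m) ⊆
        insert 1 (Ioc (2 ^ (m - 2 * r)) (2 ^ (m - 2 * r + 2 * r))) := by
      intro n hn
      obtain ⟨hns, hnm⟩ := Finset.mem_filter.1 hn
      have h := hs n hns
      have hle : n ≤ 2 ^ (m - 2 * r + 2 * r) :=
        hnm.trans (Nat.pow_le_pow_right two_pos (by lia))
      rw [Finset.mem_insert, Finset.mem_Ioc]
      rcases le_or_gt (2 * r) m with hr | hr
      · right
        refine ⟨?_, hle⟩
        rw [show 4 ^ r = 2 ^ (2 * r) by rw [pow_mul]; norm_num] at h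
        have : 2 ^ m = 2 ^ (m - 2 * r) * 2 ^ (2 * r) := by rw [← pow_add]; congr 1; lia
        rw [this] at h
        exact Nat.lt_of_mul_lt_mul_right h
      · have : n ≠ 0 := by rintro rfl; simp at h
        rw [Nat.sub_eq_zero_of_le hr.le] at hle ⊢
        rw [pow_zero]
        lia
    calc _ ≤ ∑ n ∈ s with n ≤ 2 ^ m, 1 / (n : ℝ) := Finset.sum_le_sum fun n _ => min_le_left _ _
      _ ≤ ∑ n ∈ insert (1 : ℕ) (Ioc ((2 : ℕ) ^ (m - 2 * r)) (2 ^ (m - 2 * r + 2 * r))), 1 / (n : ℝ) :=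
          Finset.sum_le_sum_of_subset_of_nonneg hsub fun _ _ _ => by positivity
      _ ≤ 1 + 2 * r := by
          have h := sum_Ioc_two_pow_inv_le (m - 2 * r) (2 * r)
          rw [Finset.sum_insert]
          · push_cast at h ⊢
            linarith
          · simp [Nat.one_le_two_pow]
  have h2 : ∑ n ∈ s with ¬ n ≤ 2 ^ m, sawCoeff (2 ^ m) n ≤ 2 := by
    obtain ⟨K, hK⟩ : ∃ K, (s.filter fun n => ¬ n ≤ 2 ^ m) ⊆ Ioo (2 ^ m) K := by
      refine ⟨s.sup id + 1, fun n hn => ?_⟩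
      obtain ⟨hns, hnm⟩ := Finset.mem_filter.1 hn
      have := Finset.le_sup (f := id) hns
      rw [Finset.mem_Ioo]
      simp only [id] at this
      lia
    calc _ ≤ ∑ n ∈ s with ¬ n ≤ 2 ^ m, 2 ^ m * ((n : ℝ) ^ 2)⁻¹ :=
          Finset.sum_le_sum fun n _ => (min_le_right _ _).trans_eq (div_eq_mul_inv _ _)
      _ ≤ ∑ n ∈ Ioo (2 ^ m) K, 2 ^ m * ((n : ℝ) ^ 2)⁻¹ :=
          Finset.sum_le_sum_of_subset_of_nonneg hK fun _ _ _ => by positivity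
      _ ≤ 2 ^ m * (2 / (((2 ^ m : ℕ) : ℝ) + 1)) := by
          rw [← Finset.mul_sum]
          gcongr
          exact sum_Ioo_inv_sq_le _ _
      _ ≤ 2 := by
          push_cast
          rw [← mul_div_assoc, div_le_iff₀ (by positivity)]
          linarith
  linarith

theorem sum_range_sqrt_inv_le (L : ℕ) :
    ∑ n ∈ range (L + 1), √(1 / (n : ℝ)) ≤ 2 * √L := by
  induction L with
  | zero => simp
  | succ L ih =>
    rw [Finset.sum_range_succ]
    have h1 : 0 < √((L + 1 : ℕ) : ℝ) := Real.sqrt_pos.2 (by positivity)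
    have h2 := Real.sq_sqrt (show (0 : ℝ) ≤ ((L + 1 : ℕ) : ℝ) by positivity)
    have h3 := Real.sq_sqrt (show (0 : ℝ) ≤ (L : ℝ) by positivity)
    have h4 := Real.sqrt_nonneg (L : ℝ)
    have h5 : √(1 / ((L + 1 : ℕ) : ℝ)) ≤ 2 * √((L + 1 : ℕ) : ℝ) - 2 * √(L : ℝ) := by
      rw [one_div, Real.sqrt_inv, inv_eq_one_div, div_le_iff₀ h1]
      push_cast at h2 h1 ⊢
      nlinarith [sq_nonneg (√((L : ℝ) + 1) - √(L : ℝ))]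
    linarith

theorem sum_sawCoeff_low_le (m r : ℕ) (s : Finset ℕ) (hs : ∀ n ∈ s, n * 4 ^ r ≤ 2 ^ m) :
    ∑ n ∈ s, √(sawCoeff (2 ^ m) n / 2 ^ m) ≤ 2 / 2 ^ r := by
  have hL : s ⊆ range (2 ^ m / 4 ^ r + 1) := fun n hn => by
    rw [Finset.mem_range, Nat.lt_succ_iff, Nat.le_div_iff_mul_le (by positivity)]
    exact hs n hn
  calc ∑ n ∈ s, √(sawCoeff (2 ^ m) n / 2 ^ m)
      ≤ ∑ n ∈ s, √(1 / (n : ℝ)) / √(2 ^ m) := by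
        refine Finset.sum_le_sum fun n _ => ?_
        rw [← Real.sqrt_div (by positivity)]
        exact Real.sqrt_le_sqrt (by gcongr; exact min_le_left _ _)
    _ ≤ ∑ n ∈ range (2 ^ m / 4 ^ r + 1), √(1 / (n : ℝ)) / √(2 ^ m) :=
        Finset.sum_le_sum_of_subset_of_nonneg hL fun _ _ _ => by positivity
    _ ≤ 2 * √((2 ^ m / 4 ^ r : ℕ) : ℝ) / √(2 ^ m) := by
        rw [← Finset.sum_div]
        gcongr
        exact sum_range_sqrt_inv_le _
    _ ≤ 2 * √((2 ^ m : ℝ) / 4 ^ r) / √(2 ^ m) := by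
        gcongr
        exact Nat.cast_div_le.trans_eq (by push_cast; rfl)
    _ = 2 / 2 ^ r := by
        rw [Real.sqrt_div (by positivity), show (4 : ℝ) ^ r = (2 ^ r) ^ 2 by
          rw [← pow_mul, mul_comm, pow_mul]; norm_num, Real.sqrt_sq (by positivity)]
        have : 0 < √((2 : ℝ) ^ m) := Real.sqrt_pos.2 (by positivity)
        field_simp

open Classical in
/-- The coefficients used in the first moment estimate: frequencies `n > 2 ^ m / 4 ^ r` are
treated by the first moment and normalised by `lam`, the others by the moment of order `1/2`. -/
def momentCoeff (m r : ℕ) (lam : ℝ) (n : ℕ) : ℝ :=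
  if 2 ^ m < n * 4 ^ r then sawCoeff (2 ^ m) n / lam else √(sawCoeff (2 ^ m) n / 2 ^ m)

theorem momentCoeff_nonneg (m r : ℕ) {lam : ℝ} (hl : 0 < lam) (n : ℕ) :
    0 ≤ momentCoeff m r lam n := by
  unfold momentCoeff
  have := sawCoeff_nonneg (A := 2 ^ m) (by positivity) n
  split_ifs <;> positivity

theorem momentCoeff_zero (m r : ℕ) (lam : ℝ) : momentCoeff m r lam 0 = 0 := by
  simp [momentCoeff, sawCoeff]

theorem sum_momentCoeff_le (m r : ℕ) {lam : ℝ} (hl : 0 < lam) (s : Finset ℕ) :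
    ∑ n ∈ s, momentCoeff m r lam n ≤ (2 * r + 3) / lam + 2 / 2 ^ r := by
  classical
  unfold momentCoeff
  rw [Finset.sum_ite, ← Finset.sum_div]
  refine add_le_add ?_ ?_
  · gcongr
    exact sum_sawCoeff_high_le m r _ fun n hn => (Finset.mem_filter.1 hn).2
  · exact sum_sawCoeff_low_le m r _ fun n hn => not_lt.1 (Finset.mem_filter.1 hn).2

theorem sawCoeff_mul_locProd_sq_le {d : ℕ} (j : Fin d → ℕ) (r : ℕ) {lam : ℝ} (hl : 0 < lam) (n : ℕ)
    (α : Fin d → ℝ) :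
    sawCoeff (2 ^ ∑ i, j i) n * (locProd j n α ^ 2 / 2 ^ ∑ i, j i) ≤
      lam * (momentCoeff (∑ i, j i) r lam n * locProd j n α) +
        (momentCoeff (∑ i, j i) r lam n * locProd j n α) ^ 2 := by
  have hP := locProd_nonneg j n α
  have hPle := locProd_le j n α
  have hc := sawCoeff_nonneg (A := 2 ^ ∑ i, j i) (by positivity) n
  have hb := momentCoeff_nonneg (∑ i, j i) r hl n
  by_cases h : 2 ^ ∑ i, j i < n * 4 ^ r
  · refine le_add_of_le_of_nonneg ?_ (by positivity)
    rw [momentCoeff, if_pos h]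
    have e : lam * (sawCoeff (2 ^ ∑ i, j i) n / lam * locProd j n α) =
        sawCoeff (2 ^ ∑ i, j i) n * locProd j n α := by field_simp
    rw [e]
    refine mul_le_mul_of_nonneg_left ?_ hc
    rw [div_le_iff₀ (by positivity), pow_two]
    exact mul_le_mul_of_nonneg_left hPle hP
  · refine le_add_of_nonneg_of_le (by positivity) (le_of_eq ?_)
    rw [momentCoeff, if_neg h, mul_pow, Real.sq_sqrt (by positivity)]
    ring

theorem lintegral_momentCoeff_mul_locProd_le {d : ℕ} (j : Fin d → ℕ) (m r : ℕ) {lam : ℝ}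
    (hl : 0 < lam) (n : ℕ) (c : Fin d → ℝ) :
    ∫⁻ α in Set.univ.pi fun i => Set.Ioc (c i) (c i + 1),
        ENNReal.ofReal (momentCoeff m r lam n * locProd j n α) ≤
      ENNReal.ofReal (4 ^ d * momentCoeff m r lam n) := by
  rcases eq_or_ne n 0 with rfl | hn
  · simp [momentCoeff_zero]
  · have hb := momentCoeff_nonneg m r hl n
    simp only [ENNReal.ofReal_mul hb]
    rw [lintegral_const_mul' _ _ ENNReal.ofReal_ne_top, mul_comm (4 ^ d : ℝ), ENNReal.ofReal_mul hb]
    gcongr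
    exact lintegral_locProd_le j hn c

theorem lintegral_tsum_momentCoeff_mul_locProd_le {d : ℕ} (j : Fin d → ℕ) (m r : ℕ) {lam : ℝ}
    (hl : 0 < lam) (c : Fin d → ℝ) :
    ∫⁻ α in Set.univ.pi fun i => Set.Ioc (c i) (c i + 1),
        ∑' n, ENNReal.ofReal (momentCoeff m r lam n * locProd j n α) ≤
      ENNReal.ofReal (4 ^ d * ((2 * r + 3) / lam + 2 / 2 ^ r)) := by
  rw [lintegral_tsum fun n =>
    ((continuous_locProd j n).measurable.const_mul _).ennreal_ofReal.aemeasurable]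
  refine ENNReal.tsum_le_of_sum_range_le fun k => ?_
  refine (Finset.sum_le_sum fun n _ =>
    lintegral_momentCoeff_mul_locProd_le j m r hl n c).trans ?_
  rw [← ENNReal.ofReal_sum_of_nonneg fun n _ =>
    mul_nonneg (by positivity) (momentCoeff_nonneg m r hl n), ← Finset.mul_sum]
  refine ENNReal.ofReal_le_ofReal ?_
  gcongr
  exact sum_momentCoeff_le m r hl _

theorem card_pieceIndex (d m : ℕ) : #(pieceIndex d m) = (2 * m) ^ d := by
  simp [pieceIndex, mul_comm]

theorem ae_exists_forall_sum_moment_le {d : ℕ} (m r : ℕ → ℕ) (lam : ℕ → ℝ) (hl : ∀ s, 0 < lam s)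
    (hsum : Summable fun s => (2 * m s : ℝ) ^ d * ((2 * r s + 3) / lam s + 2 / 2 ^ r s)) :
    ∀ᵐ α ∂(volume : Measure (Fin d → ℝ)), ∃ M : ℝ, 0 ≤ M ∧ ∀ (s : ℕ) (S : Finset ℕ),
      ∑ a ∈ pieceIndex d (m s), ∑ n ∈ S,
        momentCoeff (∑ i, (a i).1) (r s) (lam s) n * locProd (fun i => (a i).1) n α ≤ M := by
  set f : ℕ → (Fin d → ℕ × Bool) → ℕ → (Fin d → ℝ) → ℝ := fun s a n α =>
    momentCoeff (∑ i, (a i).1) (r s) (lam s) n * locProd (fun i => (a i).1) n α with hf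
  have hf0 : ∀ s a n α, 0 ≤ f s a n α := fun s a n α =>
    mul_nonneg (momentCoeff_nonneg _ _ (hl s) n) (locProd_nonneg _ _ _)
  have hmeas : ∀ s a, Measurable fun α => ∑' n, ENNReal.ofReal (f s a n α) := fun s a =>
    Measurable.tsum fun n =>
      ((continuous_locProd _ n).measurable.const_mul _).ennreal_ofReal
  have hmeas' : ∀ s, Measurable fun α => ∑ a ∈ pieceIndex d (m s),
      ∑' n, ENNReal.ofReal (f s a n α) := fun s =>
    Finset.measurable_fun_sum _ fun a _ => hmeas s a
  have hcube : ∀ c : Fin d → ℤ, ∀ᵐ α ∂(volume : Measure (Fin d → ℝ)),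
      α ∈ (Set.univ.pi fun i => Set.Ioc (c i : ℝ) (c i + 1)) →
      ∑' s, ∑ a ∈ pieceIndex d (m s), ∑' n, ENNReal.ofReal (f s a n α) < ⊤ := fun c => by
    rw [← ae_restrict_iff' (MeasurableSet.univ_pi fun i => measurableSet_Ioc)]
    refine ae_lt_top (Measurable.tsum hmeas') ?_
    rw [lintegral_tsum fun s => (hmeas' s).aemeasurable]
    refine ne_top_of_le_ne_top (hsum.mul_left (4 ^ d)).tsum_ofReal_ne_top
      (ENNReal.tsum_le_tsum fun s => ?_)
    rw [lintegral_finsetSum _ fun a _ => hmeas s a]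
    refine (Finset.sum_le_card_nsmul _ _ _ fun a _ =>
      lintegral_tsum_momentCoeff_mul_locProd_le (fun i => (a i).1) _ (r s) (hl s)
        fun i => (c i : ℝ)).trans_eq ?_
    rw [card_pieceIndex, nsmul_eq_mul, ← ENNReal.ofReal_natCast,
      ← ENNReal.ofReal_mul (by positivity)]
    push_cast
    congr 1
    ring
  filter_upwards [ae_all_iff.2 hcube] with α hα
  have htop := hα (fun i => ⌈α i⌉ - 1) fun i _ => by
    push_cast
    constructor <;> linarith [Int.ceil_lt_add_one (α i), Int.le_ceil (α i)]
  refine ⟨(∑' s, ∑ a ∈ pieceIndex d (m s), ∑' n, ENNReal.ofReal (f s a n α)).toReal,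
    ENNReal.toReal_nonneg, fun s S => ?_⟩
  rw [← ENNReal.ofReal_le_iff_le_toReal htop.ne,
    ENNReal.ofReal_sum_of_nonneg fun a _ => Finset.sum_nonneg fun n _ => hf0 s a n α]
  refine le_trans (Finset.sum_le_sum fun a _ => ?_) (ENNReal.le_tsum s)
  rw [ENNReal.ofReal_sum_of_nonneg fun n _ => hf0 s a n α]
  exact ENNReal.sum_le_tsum S

theorem sum_pieceBound_le {d m r : ℕ} {lam M : ℝ} (hl : 0 < lam) (α : Fin d → ℝ)
    (h : ∀ S : Finset ℕ, ∑ a ∈ pieceIndex d m, ∑ n ∈ S,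
      momentCoeff (∑ i, (a i).1) r lam n * locProd (fun i => (a i).1) n α ≤ M) :
    ∑ a ∈ pieceIndex d m, pieceBound (fun i => (a i).1) α ≤ lam * M + M ^ 2 := by
  unfold pieceBound
  rw [← Summable.tsum_finsetSum fun a _ => summable_sawCoeff_mul_locProd _ α]
  refine Real.tsum_le_of_sum_range_le (fun n => Finset.sum_nonneg fun a _ => ?_) fun k => ?_
  · have := sawCoeff_nonneg (A := 2 ^ ∑ i, (a i).1) (by positivity) n
    positivity
  set g : ℕ → (Fin d → ℕ × Bool) → ℝ := fun n a =>
    momentCoeff (∑ i, (a i).1) r lam n * locProd (fun i => (a i).1) n α with hg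
  have hg0 : ∀ n a, 0 ≤ g n a := fun n a =>
    mul_nonneg (momentCoeff_nonneg _ _ hl n) (locProd_nonneg _ _ _)
  have hk : ∑ p ∈ range k ×ˢ pieceIndex d m, g p.1 p.2 ≤ M := by
    rw [Finset.sum_product, Finset.sum_comm]
    exact h (range k)
  rw [← Finset.sum_product' (f := fun (n : ℕ) (a : Fin d → ℕ × Bool) =>
    sawCoeff (2 ^ ∑ i, (a i).1) n * (locProd (fun i => (a i).1) n α ^ 2 / 2 ^ ∑ i, (a i).1))]
  calc _ ≤ ∑ p ∈ range k ×ˢ pieceIndex d m, (lam * g p.1 p.2 + g p.1 p.2 ^ 2) :=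
        Finset.sum_le_sum fun p _ =>
          sawCoeff_mul_locProd_sq_le (fun i => (p.2 i).1) r hl p.1 α
    _ ≤ lam * ∑ p ∈ range k ×ˢ pieceIndex d m, g p.1 p.2 +
        (∑ p ∈ range k ×ˢ pieceIndex d m, g p.1 p.2) ^ 2 := by
        rw [Finset.sum_add_distrib, ← Finset.mul_sum]
        gcongr
        exact Finset.sum_sq_le_sq_sum_of_nonneg fun p _ => hg0 _ _
    _ ≤ lam * M + M ^ 2 := by
        have := Finset.sum_nonneg fun p (_ : p ∈ range k ×ˢ pieceIndex d m) => hg0 p.1 p.2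
        gcongr

theorem abs_discLF_le_of_moment {d N m r : ℕ} {lam M x : ℝ} (hN : N ≠ 0)
    (hm : Nat.log 2 N + 1 ≤ m) (hl : 0 < lam) (α : Fin d → ℝ)
    (h : ∀ S : Finset ℕ, ∑ a ∈ pieceIndex d m, ∑ n ∈ S,
      momentCoeff (∑ i, (a i).1) r lam n * locProd (fun i => (a i).1) n α ≤ M)
    (h0 : 0 < x) (h1 : x ≤ 1) :
    |DiscLF d N α x| ≤ 2 * 50 ^ d * ((2 * m) ^ d + (lam * M + M ^ 2)) := by
  have hsub : pieceIndex d (Nat.log 2 N + 1) ⊆ pieceIndex d m :=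
    Fintype.piFinset_subset _ _ fun _ => Finset.product_subset_product_left
      (Finset.range_subset_range.2 hm)
  have hnn : ∀ j : Fin d → ℕ, 0 ≤ pieceBound j α := fun j => tsum_nonneg fun n => by
    have := sawCoeff_nonneg (A := 2 ^ ∑ i, j i) (by positivity) n
    positivity
  calc _ ≤ ∑ a ∈ pieceIndex d (Nat.log 2 N + 1),
        2 * 50 ^ d * (1 + pieceBound (fun i => (a i).1) α) := abs_discLF_le hN α h0 h1
    _ ≤ ∑ a ∈ pieceIndex d m, 2 * 50 ^ d * (1 + pieceBound (fun i => (a i).1) α) :=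
        Finset.sum_le_sum_of_subset_of_nonneg hsub fun a _ _ => by
          have := hnn fun i => (a i).1
          positivity
    _ = 2 * 50 ^ d * ((2 * m) ^ d + ∑ a ∈ pieceIndex d m, pieceBound (fun i => (a i).1) α) := by
        rw [← Finset.mul_sum, Finset.sum_add_distrib, Finset.sum_const, card_pieceIndex]
        simp
    _ ≤ _ := by
        gcongr
        exact sum_pieceBound_le hl α h

theorem natLog_two_add_one_le {N : ℕ} (hN : N ≠ 0) {t : ℝ} (ht : Real.log N ≤ t) :
    Nat.log 2 N + 1 ≤ ⌈2 * t⌉₊ + 1 := by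
  have h1 : (2 : ℝ) ^ Nat.log 2 N ≤ N := by exact_mod_cast Nat.pow_log_le_self 2 hN
  have h2 := Real.log_le_log (by positivity) h1
  rw [Real.log_pow] at h2
  have h3 : (Nat.log 2 N : ℝ) ≤ ⌈2 * t⌉₊ := by
    refine le_trans ?_ (Nat.le_ceil _)
    nlinarith [Real.log_two_gt_d9, (Nat.log 2 N).cast_nonneg (α := ℝ)]
  exact_mod_cast add_le_add_left (Nat.cast_le.1 h3) 1

theorem add_one_le_tsum_mul {φ : ℕ → ℝ} (hpos : ∀ n, 0 < φ n) (hmono : Monotone φ)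
    (hsum : Summable fun n => 1 / φ n) (s : ℕ) : (s + 1 : ℝ) ≤ (∑' n, 1 / φ n) * φ s := by
  rw [← div_le_iff₀ (hpos s)]
  calc (s + 1 : ℝ) / φ s = ∑ n ∈ range (s + 1), 1 / φ s := by
        simp [div_eq_mul_inv]
    _ ≤ ∑ n ∈ range (s + 1), 1 / φ n := Finset.sum_le_sum fun n hn =>
        one_div_le_one_div_of_le (hpos n) (hmono (Finset.mem_range_succ_iff.1 hn))
    _ ≤ _ := hsum.sum_le_tsum _ fun n _ => (one_div_pos.2 (hpos n)).le

theorem pow_le_inv_pow_mul_pow {φ : ℕ → ℝ} (hpos : ∀ n, 0 < φ n) (hmono : Monotone φ)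
    {k l : ℕ} (hkl : k ≤ l) (s : ℕ) : φ s ^ k ≤ (φ 0)⁻¹ ^ (l - k) * φ s ^ l := by
  have h0 := hpos 0
  have h1 : 1 ≤ ((φ 0)⁻¹ * φ s) ^ (l - k) := by
    refine one_le_pow₀ ?_
    rw [inv_mul_eq_div, one_le_div h0]
    exact hmono (Nat.zero_le s)
  calc φ s ^ k ≤ ((φ 0)⁻¹ * φ s) ^ (l - k) * φ s ^ k :=
        le_mul_of_one_le_left (pow_nonneg (hpos s).le _) h1
    _ = _ := by rw [mul_pow, mul_assoc, ← pow_add, Nat.sub_add_cancel hkl]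

theorem two_mul_ceil_add_one_le (s : ℕ) :
    2 * ((⌈2 * Real.exp s⌉₊ + 1 : ℕ) : ℝ) ≤ 8 * Real.exp s := by
  have h1 := Nat.ceil_lt_add_one (show 0 ≤ 2 * Real.exp s by positivity)
  have h2 : 1 ≤ Real.exp s := Real.one_le_exp (by positivity)
  push_cast
  linarith

theorem summable_moment_weights (d : ℕ) {φ : ℕ → ℝ} (hpos : ∀ n, 0 < φ n)
    (hsum : Summable fun n => 1 / φ n) :
    Summable fun s : ℕ => (2 * (⌈2 * Real.exp s⌉₊ + 1 : ℕ) : ℝ) ^ d *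
      ((2 * (2 * (d + 1) * s : ℕ) + 3) / (Real.exp s ^ d * (s + 1) * φ s) +
        2 / 2 ^ (2 * (d + 1) * s)) := by
  have hexp : Summable fun s : ℕ => Real.exp (-1) ^ s :=
    summable_geometric_of_lt_one (Real.exp_pos _).le (Real.exp_lt_one_iff.2 (by norm_num))
  refine Summable.of_nonneg_of_le (fun s => ?_) (fun s => ?_)
    (((hsum.mul_left (4 * d + 7 : ℝ)).add (hexp.mul_left 2)).mul_left (8 ^ d : ℝ))
  · have := hpos s
    positivity
  have hE := Real.exp_pos s
  have h1 : (2 * (2 * (d + 1) * s : ℕ) + 3 : ℝ) ≤ (4 * d + 7) * (s + 1) := by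
    push_cast
    nlinarith [(d.cast_nonneg : (0 : ℝ) ≤ d)]
  have h2 : Real.exp s ^ (d + 1) ≤ 2 ^ (2 * (d + 1) * s) := by
    rw [← Real.exp_one_pow s, ← pow_mul, mul_comm s, mul_assoc, pow_mul (2 : ℝ) 2]
    have := Real.exp_one_lt_d9
    gcongr
    linarith
  calc _ ≤ (8 * Real.exp s) ^ d * ((4 * d + 7) * (s + 1) / (Real.exp s ^ d * (s + 1) * φ s) +
        2 / Real.exp s ^ (d + 1)) := by
        have := hpos s
        gcongr ?_ ^ d * (?_ / _ + _ / ?_)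
        exact two_mul_ceil_add_one_le s
    _ = _ := by
        have := hpos s
        rw [show Real.exp (-1) ^ s = (Real.exp s)⁻¹ by rw [Real.exp_neg, inv_pow, Real.exp_one_pow]]
        field_simp
        ring

/-- For a positive increasing `φ` with `∑ 1/φ(n) < ∞`, for a.e. `α ∈ ℝ^d` there is a
constant `C(α,φ)` with `Δ(α;N) ≤ C·(log N)^d·φ(log log N)^{max{3,d}}` for all `N ≥ 3`. -/
theorem stmt_0 (d : ℕ) (hd : 1 ≤ d) (φ : ℕ → ℝ) (hφpos : ∀ n, 0 < φ n)
    (hφmono : Monotone φ) (hφsum : Summable fun n => 1 / φ n) :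
    ∀ᵐ α ∂(volume : Measure (Fin d → ℝ)),
      ∃ C : ℝ, ∀ N : ℕ, 3 ≤ N → ∀ x ∈ Set.Ioc (0 : ℝ) 1,
        |DiscLF d N α x| ≤
          C * Real.log N ^ d * φ (Nat.ceil (Real.log (Real.log N))) ^ max 3 d := by
  have hlam : ∀ s : ℕ, 0 < Real.exp s ^ d * (s + 1) * φ s := fun s => by
    have := hφpos s
    positivity
  filter_upwards [ae_exists_forall_sum_moment_le (fun s => ⌈2 * Real.exp s⌉₊ + 1)
    (fun s => 2 * (d + 1) * s) _ hlam (summable_moment_weights d hφpos hφsum)]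
    with α ⟨M, hM, hα⟩
  set K := ∑' n, 1 / φ n
  set w := max 3 d
  refine ⟨2 * 50 ^ d * (Real.exp 1 ^ d *
    ((8 ^ d + M ^ 2) * (φ 0)⁻¹ ^ w + M * K * (φ 0)⁻¹ ^ (w - 2))), fun N hN x hx => ?_⟩
  have hN3 : (3 : ℝ) ≤ N := by exact_mod_cast hN
  have hlog1 : 1 < Real.log N := by
    rw [Real.lt_log_iff_exp_lt (by linarith)]
    linarith [Real.exp_one_lt_d9]
  have hll : 0 < Real.log (Real.log N) := Real.log_pos hlog1
  set s := ⌈Real.log (Real.log N)⌉₊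
  have hle : Real.log N ≤ Real.exp s := by
    rw [← Real.log_le_iff_le_exp (by linarith)]
    exact Nat.le_ceil _
  have hge : Real.exp s ≤ Real.exp 1 * Real.log N := by
    rw [← Real.log_le_log_iff (by positivity) (by positivity), Real.log_exp,
      Real.log_mul (by positivity) (by positivity), Real.log_exp]
    linarith [Nat.ceil_lt_add_one hll.le]
  have hE1 : 1 ≤ Real.exp s := by linarith
  have hφs := hφpos s
  have hφ0 := hφpos 0
  have hK := add_one_le_tsum_mul hφpos hφmono hφsum s
  have hc0 := pow_le_inv_pow_mul_pow hφpos hφmono (Nat.zero_le w) s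
  have hc2 := pow_le_inv_pow_mul_pow hφpos hφmono (show 2 ≤ w by lia) s
  rw [pow_zero, Nat.sub_zero] at hc0
  calc |DiscLF d N α x| ≤ 2 * 50 ^ d * ((2 * (⌈2 * Real.exp s⌉₊ + 1 : ℕ)) ^ d +
        (Real.exp s ^ d * (s + 1) * φ s * M + M ^ 2)) :=
        abs_discLF_le_of_moment (by lia) (natLog_two_add_one_le (by lia) hle) (hlam s) α
          (hα s) hx.1 hx.2
    _ ≤ 2 * 50 ^ d * ((8 * Real.exp s) ^ d +
        (Real.exp s ^ d * (K * φ s) * φ s * M + Real.exp s ^ d * M ^ 2)) := by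
        gcongr 2 * 50 ^ d * (?_ ^ d + (_ * ?_ * _ * _ + ?_))
        · exact two_mul_ceil_add_one_le s
        · exact le_mul_of_one_le_left (by positivity) (one_le_pow₀ hE1)
    _ = 2 * 50 ^ d * (Real.exp s ^ d * ((8 ^ d + M ^ 2) * 1 + M * K * φ s ^ 2)) := by
        ring
    _ ≤ 2 * 50 ^ d * ((Real.exp 1 * Real.log N) ^ d * ((8 ^ d + M ^ 2) * ((φ 0)⁻¹ ^ w * φ s ^ w) +
        M * K * ((φ 0)⁻¹ ^ (w - 2) * φ s ^ w))) := by
        have hK0 : 0 ≤ K := tsum_nonneg fun n => (one_div_pos.2 (hφpos n)).le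
        gcongr
    _ = _ := by ring
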